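/- Let p be a prime and let H be a nontrivial abelian finite group acting faithfully on a faithful irreducible module V of order p^a over the field of p elements, and let k be a subfield of the complex numbers containing the primitive pth roots of unity. If G = V ⋊ H, then acd_k(G) ≥ 2(p + 1)/(p + 3). -/

import Mathlib

open scoped BigOperators

/-- The set of irreducible complex characters of `G`, viewed as functions `G → ℂ`. -/
def Irr (G : Type) [Monoid G] : Set (G → ℂ) :=
  {f | ∃ V : FDRep ℂ G, CategoryTheory.Simple V ∧ f = V.character}

/-- The degree of a character, i.e. its value at the identity (a natural number). -/
noncomputable def charDeg {G : Type} [One G] (f : G → ℂ) : ℕ := ⌊(f 1).re⌋₊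

/-- The average of the degrees of the characters in a set `S` of characters. -/
noncomputable def acd {G : Type} [One G] (S : Set (G → ℂ)) : ℝ :=
  (∑ᶠ f ∈ S, (f 1).re) / (S.ncard : ℝ)

/-- `G` has a normal `p`-complement: a normal subgroup of order coprime to `p`
whose index is a power of `p`. -/
def HasNormalPComplement (p : ℕ) (G : Type) [Group G] : Prop :=
  ∃ N : Subgroup G, N.Normal ∧ Nat.Coprime (Nat.card N) p ∧ ∃ n : ℕ, N.index = p ^ n

namespace AcdAux

open CategoryTheory

/-- Orthonormality of irreducible characters. -/
theorem irr_orth {G : Type} [Group G] [Fintype G] {f g : G → ℂ} (hf : f ∈ Irr G) (hg : g ∈ Irr G)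
    (hne : f ≠ g) : ∑ x : G, f x * g x⁻¹ = 0 := by
  classical
  obtain ⟨V, hV, rfl⟩ := hf
  obtain ⟨W, hW, rfl⟩ := hg
  have hc : (Nat.card G : ℂ) ≠ 0 := by exact_mod_cast Nat.card_pos.ne'
  have := invertibleOfNonzero hc
  have h := FDRep.char_orthonormal V W
  rw [if_neg (fun ⟨i⟩ => hne (FDRep.char_iso i))] at h
  simpa [hc] using h

theorem irr_norm {G : Type} [Group G] [Fintype G] {f : G → ℂ} (hf : f ∈ Irr G) :
    ∑ x : G, f x * f x⁻¹ ≠ 0 := by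
  classical
  obtain ⟨V, hV, rfl⟩ := hf
  have hc : (Nat.card G : ℂ) ≠ 0 := by exact_mod_cast Nat.card_pos.ne'
  have := invertibleOfNonzero hc
  have h := FDRep.char_orthonormal V V
  rw [if_pos ⟨Iso.refl V⟩] at h
  intro h0
  rw [h0] at h
  simp at h

theorem irr_finite (G : Type) [Group G] [Fintype G] : (Irr G).Finite := by
  classical
  have hli : LinearIndependent ℂ (fun f : Irr G => (f : G → ℂ)) := by
    rw [linearIndependent_iff']
    intro s c hs j hj
    have h1 : ∑ x : G, (∑ i ∈ s, c i • (i : G → ℂ)) x * (j : G → ℂ) x⁻¹ = 0 := by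
      rw [hs]; simp
    simp only [Finset.sum_apply, Pi.smul_apply, smul_eq_mul, Finset.sum_mul] at h1
    rw [Finset.sum_comm, Finset.sum_eq_single_of_mem j hj] at h1
    · simp only [mul_assoc, ← Finset.mul_sum] at h1
      exact (mul_eq_zero.mp h1).resolve_right (irr_norm j.2)
    · intro i _ hij
      simp only [mul_assoc, ← Finset.mul_sum]
      rw [irr_orth i.2 j.2 (fun h => hij (Subtype.ext h)), mul_zero]
  exact Set.finite_coe_iff.mp hli.finite

/-- Degrees are natural numbers at least one; degree-one characters are multiplicative. -/
theorem irr_deg {G : Type} [Group G] [Fintype G] {f : G → ℂ} (hf : f ∈ Irr G) :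
    2 ≤ (f 1).re ∨ (f 1 = 1 ∧ ∀ x y, f (x * y) = f x * f y) := by
  have hn := irr_norm hf
  obtain ⟨V, hV, rfl⟩ := hf
  have h1 := FDRep.char_one V
  obtain h | h | h : Module.finrank ℂ V = 0 ∨ Module.finrank ℂ V = 1 ∨ 2 ≤ Module.finrank ℂ V := by
    omega
  · exfalso
    apply hn
    have : Subsingleton V := Module.finrank_zero_iff.mp h
    refine Finset.sum_eq_zero fun x _ => ?_
    have : V.ρ x = 0 := LinearMap.ext fun v => Subsingleton.elim _ _
    simp [FDRep.character, this]
  · right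
    refine ⟨by rw [h1, h]; simp, fun x y => ?_⟩
    have key : ∀ A : V →ₗ[ℂ] V, ∃ c : ℂ, A = c • LinearMap.id := by
      intro A
      obtain ⟨v, hv, hs⟩ := finrank_eq_one_iff'.mp h
      obtain ⟨c, hc⟩ := hs (A v)
      refine ⟨c, LinearMap.ext fun w => ?_⟩
      obtain ⟨d, rfl⟩ := hs w
      simp [← hc]
    obtain ⟨c, hc⟩ := key (V.ρ x)
    obtain ⟨d, hd⟩ := key (V.ρ y)
    simp only [FDRep.character, map_mul, hc, hd]
    have ht : LinearMap.trace ℂ V LinearMap.id = 1 := by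
      rw [LinearMap.trace_id, h]; simp
    have : (c • LinearMap.id : V →ₗ[ℂ] V) * (d • LinearMap.id) = (c * d) • LinearMap.id := by
      ext v
      simp [mul_smul, smul_comm d c v]
    rw [this]
    simp only [map_smul, ht, smul_eq_mul, mul_one]
  · left
    rw [h1]
    simp only [Complex.natCast_re]
    exact_mod_cast h

section
variable {H V : Type} [CommGroup H] [Fintype H] [CommGroup V] [Fintype V] (φ : H →* MulAut V)

/-- The representation induced from a linear character of `V`. -/
noncomputable def indRep (l : V →* ℂˣ) : Representation ℂ (V ⋊[φ] H) (H → ℂ) where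
  toFun g :=
    { toFun := fun f y => (l (φ y g.left) : ℂ) * f (y * g.right)
      map_add' := fun f f' => by ext y; simp [mul_add]
      map_smul' := fun c f => by ext y; simp; ring }
  map_one' := by ext f y; simp
  map_mul' g g' := by
    refine LinearMap.ext fun f => funext fun y => ?_
    simp [mul_assoc]

/-- The twist of `l` by `y`. -/
noncomputable def tw (l : V →* ℂˣ) (y : H) : V →* ℂˣ := l.comp (φ y).toMonoidHom

theorem tw_apply (l : V →* ℂˣ) (y : H) (v : V) : tw φ l y v = l (φ y v) := rfl

theorem char_indRep [DecidableEq H] (l : V →* ℂˣ) (g : V ⋊[φ] H) :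
    (FDRep.of (indRep φ l)).character g =
      if g.right = 1 then ∑ y : H, (tw φ l y g.left : ℂ) else 0 := by
  have : (FDRep.of (indRep φ l)).character g = LinearMap.trace ℂ (H → ℂ) (indRep φ l g) := rfl
  rw [this, LinearMap.trace_eq_matrix_trace ℂ (Pi.basisFun ℂ H), LinearMap.toMatrix_eq_toMatrix', Matrix.trace]
  have h2 : ∀ y, (LinearMap.toMatrix' (indRep φ l g)).diag y =
      if g.right = 1 then (tw φ l y g.left : ℂ) else 0 := by
    intro y
    rw [Matrix.diag_apply, LinearMap.toMatrix'_apply]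
    simp [indRep, tw_apply, Pi.single_apply]
  rw [Finset.sum_congr rfl fun y _ => h2 y]
  split_ifs <;> simp

theorem sum_lin (l : V →* ℂˣ) (m : V →* ℂˣ) [Decidable (l = m)] :
    ∑ v : V, (l v : ℂ) * (m v⁻¹ : ℂ) = if l = m then (Fintype.card V : ℂ) else 0 := by
  classical
  split_ifs with h
  · subst h
    simp
  · have := sum_hom_units_eq_zero ((Units.coeHom ℂ).comp (l * m⁻¹)) (by
      intro h'
      apply h
      ext v
      have := DFunLike.congr_fun h' v
      simp at this
      field_simp at this
      exact this)
    simpa using this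

theorem sum_orb [DecidableEq (V →* ℂˣ)] (l m : V →* ℂˣ) :
    ∑ v : V, (∑ y : H, (tw φ l y v : ℂ)) * (m v⁻¹ : ℂ) =
      (Fintype.card V : ℂ) * (Finset.univ.filter fun y : H => tw φ l y = m).card := by
  simp only [Finset.sum_mul]
  rw [Finset.sum_comm]
  simp only [sum_lin]
  simp [Finset.sum_ite, mul_comm]

/-- Every element of `V` is a commutator with a given nontrivial `x`. -/
theorem comm_surj (hfaith : Function.Injective φ)
    (hirr : ∀ W : Subgroup V, (∀ h : H, ∀ w ∈ W, φ h w ∈ W) → W = ⊥ ∨ W = ⊤)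
    {x : H} (hx : x ≠ 1) (v : V) : ∃ w : V, v = φ x w * w⁻¹ := by
  let d : V →* V :=
    { toFun := fun w => φ x w * w⁻¹
      map_one' := by simp
      map_mul' := fun a b => by
        rw [map_mul, mul_inv, mul_mul_mul_comm] }
  have hcomm : ∀ (h : H) (w : V), φ h (φ x w) = φ x (φ h w) := by
    intro h w
    rw [← MulAut.mul_apply, ← MulAut.mul_apply, ← map_mul, ← map_mul, mul_comm]
  rcases hirr d.range (by
    rintro h _ ⟨w, rfl⟩
    refine ⟨φ h w, ?_⟩
    simp [d, hcomm]) with h | h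
  · exfalso
    apply hx
    apply hfaith
    rw [map_one]
    ext w
    have : d w ∈ d.range := ⟨w, rfl⟩
    rw [h, Subgroup.mem_bot] at this
    simpa [d, mul_inv_eq_one] using this
  · have : v ∈ d.range := by rw [h]; trivial
    obtain ⟨w, hw⟩ := this
    exact ⟨w, hw.symm⟩

theorem tw_inj (hfaith : Function.Injective φ)
    (hirr : ∀ W : Subgroup V, (∀ h : H, ∀ w ∈ W, φ h w ∈ W) → W = ⊥ ∨ W = ⊤)
    {l : V →* ℂˣ} (hl : l ≠ 1) {y z : H} (h : tw φ l y = tw φ l z) : y = z := by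
  by_contra hne
  apply hl
  have hx : y * z⁻¹ ≠ 1 := by rwa [Ne, mul_inv_eq_one]
  ext v
  obtain ⟨w, rfl⟩ := comm_surj φ hfaith hirr hx v
  have := DFunLike.congr_fun h ((φ z)⁻¹ w)
  rw [tw_apply, tw_apply, ← MulAut.mul_apply, ← MulAut.mul_apply, ← map_inv, ← map_mul, ← map_mul,
    mul_inv_cancel, map_one] at this
  rw [map_mul, this, map_inv]
  simp

theorem ind_irr (hfaith : Function.Injective φ)
    (hirr : ∀ W : Subgroup V, (∀ h : H, ∀ w ∈ W, φ h w ∈ W) → W = ⊥ ∨ W = ⊤)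
    {l : V →* ℂˣ} (hl : l ≠ 1) : (FDRep.of (indRep φ l)).character ∈ Irr (V ⋊[φ] H) := by
  classical
  have : Fintype (V ⋊[φ] H) := Fintype.ofEquiv _ SemidirectProduct.equivProd.symm
  refine ⟨_, ?_, rfl⟩
  rw [FDRep.simple_iff_char_is_norm_one]
  have e : ∀ F : V ⋊[φ] H → ℂ, ∑ g, F g = ∑ q : V × H, F ⟨q.1, q.2⟩ := fun F =>
    (Equiv.sum_comp SemidirectProduct.equivProd.symm F).symm
  rw [e, Fintype.sum_prod_type_right, Finset.sum_eq_single (1 : H)]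
  · simp only [char_indRep]
    simp only [SemidirectProduct.inv_left, SemidirectProduct.inv_right, inv_one, if_true,
      map_one, MulAut.one_apply]
    simp only [Finset.mul_sum (s := (Finset.univ : Finset H))]
    rw [Finset.sum_comm]
    have : ∀ z : H, (Finset.univ.filter fun y : H => tw φ l y = tw φ l z) = {z} := by
      intro z
      ext y
      simp only [Finset.mem_filter, Finset.mem_univ, true_and, Finset.mem_singleton]
      exact ⟨fun h => tw_inj φ hfaith hirr hl h, fun h => h ▸ rfl⟩
    simp only [sum_orb, this]
    rw [SemidirectProduct.card, Nat.card_eq_fintype_card, Nat.card_eq_fintype_card]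
    simp [mul_comm]
  · intro y _ hy
    refine Finset.sum_eq_zero fun v _ => ?_
    rw [char_indRep, if_neg hy, zero_mul]
  · simp

theorem ind_eq {l m : V →* ℂˣ}
    (h : (FDRep.of (indRep φ l)).character = (FDRep.of (indRep φ m)).character) :
    ∃ y, m = tw φ l y := by
  classical
  have hv : ∀ v : V, ∑ y : H, (tw φ l y v : ℂ) = ∑ y : H, (tw φ m y v : ℂ) := by
    intro v
    have := congr_fun h ⟨v, 1⟩
    simpa only [char_indRep, if_true] using this
  have h1 := sum_orb φ l m
  simp only [hv] at h1
  rw [sum_orb φ m m] at h1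
  have hc : (Fintype.card V : ℂ) ≠ 0 := by exact_mod_cast Fintype.card_ne_zero
  have h2 := mul_left_cancel₀ hc h1
  have h3 : (Finset.univ.filter fun y : H => tw φ m y = m).card =
    (Finset.univ.filter fun y : H => tw φ l y = m).card := by exact_mod_cast h2
  have h4 : 0 < (Finset.univ.filter fun y : H => tw φ m y = m).card := by
    refine Finset.card_pos.mpr ⟨1, ?_⟩
    simp [MonoidHom.ext_iff, tw_apply]
  rw [h3] at h4
  obtain ⟨y, hy⟩ := Finset.card_pos.mp h4
  exact ⟨y, (Finset.mem_filter.mp hy).2.symm⟩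

theorem ind_val {p : ℕ} (hp : p.Prime) (helem : ∀ v : V, v ^ p = 1) (k : Subfield ℂ)
    (hk : ∀ ζ : ℂ, IsPrimitiveRoot ζ p → ζ ∈ k) (l : V →* ℂˣ) (g : V ⋊[φ] H) :
    (FDRep.of (indRep φ l)).character g ∈ k := by
  classical
  rw [char_indRep]
  split_ifs
  · refine k.sum_mem fun y _ => ?_
    set u : ℂ := (tw φ l y g.left : ℂ) with hu
    have hup : u ^ p = 1 := by
      rw [hu, ← Units.val_pow_eq_pow_val, ← map_pow, helem]; simp
    by_cases h1 : u = 1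
    · rw [h1]; exact k.one_mem
    · have := Fact.mk hp
      exact hk u (orderOf_eq_prime hup h1 ▸ IsPrimitiveRoot.orderOf u)
  · exact k.zero_mem

theorem ind_one (l : V →* ℂˣ) :
    (FDRep.of (indRep φ l)).character 1 = (Fintype.card H : ℂ) := by
  classical
  rw [char_indRep]
  simp

theorem lin_eq [Nontrivial H] (hfaith : Function.Injective φ)
    (hirr : ∀ W : Subgroup V, (∀ h : H, ∀ w ∈ W, φ h w ∈ W) → W = ⊥ ∨ W = ⊤)
    {f f' : V ⋊[φ] H → ℂ}
    (h1 : f 1 = 1) (hm : ∀ x y, f (x * y) = f x * f y)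
    (h1' : f' 1 = 1) (hm' : ∀ x y, f' (x * y) = f' x * f' y)
    (h : ∀ x : H, f (SemidirectProduct.inr x) = f' (SemidirectProduct.inr x)) : f = f' := by
  obtain ⟨x, hx⟩ := exists_ne (1 : H)
  have key : ∀ F : V ⋊[φ] H → ℂ, F 1 = 1 → (∀ x y, F (x * y) = F x * F y) →
      ∀ v : V, F (SemidirectProduct.inl v) = 1 := by
    intro F h1 hm v
    obtain ⟨w, rfl⟩ := comm_surj φ hfaith hirr hx v
    rw [map_mul, SemidirectProduct.inl_aut, hm, hm, hm, mul_right_comm, mul_comm (F _) (F _),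
      mul_assoc]
    rw [map_inv, map_inv]
    have e1 : F (SemidirectProduct.inr x)⁻¹ * F (SemidirectProduct.inr x) = 1 := by
      rw [← hm, inv_mul_cancel, h1]
    have e2 : F (SemidirectProduct.inl w) * F (SemidirectProduct.inl w)⁻¹ = 1 := by
      rw [← hm, mul_inv_cancel, h1]
    linear_combination e1 * F (SemidirectProduct.inl w) * F (SemidirectProduct.inl w)⁻¹ + e2
  funext g
  rw [← SemidirectProduct.inl_left_mul_inr_right g, hm, hm', key f h1 hm, key f' h1' hm', h]

end

theorem arith (p h m d : ℝ) (hp : 2 ≤ p) (hh : 2 ≤ h) (hm : 1 ≤ m) (hpm : p ≤ h * m + 1)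
    (hd : d ≤ h) : 0 ≤ m * (h - 2 * (p + 1) / (p + 3)) + d * (1 - 2 * (p + 1) / (p + 3)) := by
  have h3 : 0 < p + 3 := by linarith
  have e : m * (h - 2 * (p + 1) / (p + 3)) + d * (1 - 2 * (p + 1) / (p + 3)) =
      (m * (h * (p + 3) - 2 * (p + 1)) - d * (p - 1)) / (p + 3) := by
    field_simp; ring
  rw [e]
  apply div_nonneg _ h3.le
  have a1 : d * (p - 1) ≤ h * (p - 1) := mul_le_mul_of_nonneg_right hd (by linarith)
  suffices 0 ≤ m * (h * (p + 3) - 2 * (p + 1)) - h * (p - 1) by linarith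
  -- linear in p
  rcases le_total 0 (m * h - 2 * m - h) with hs | hs
  · have : 0 ≤ (m * h - 2 * m - h) * p := by positivity
    nlinarith
  · have b1 : (m * h - 2 * m - h) * (h * m + 1) ≤ (m * h - 2 * m - h) * p :=
      mul_le_mul_of_nonpos_left hpm hs
    have b2 : 0 ≤ m * (h - 2) * (h * m - h + 2) := by
      have : 0 ≤ h * m - h + 2 := by nlinarith
      have : 0 ≤ h - 2 := by linarith
      positivity
    nlinarith

end AcdAux

open AcdAux in
theorem abelian_semidirect_acd_ge
    (p a : ℕ) (hp : p.Prime) (ha : 0 < a)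
    (H V : Type) [CommGroup H] [Fintype H] [Nontrivial H]
    [CommGroup V] [Fintype V] [Nontrivial V]
    (helem : ∀ v : V, v ^ p = 1) (hcard : Nat.card V = p ^ a)
    (φ : H →* MulAut V) (hfaith : Function.Injective φ)
    (hirr : ∀ W : Subgroup V, (∀ h : H, ∀ w ∈ W, φ h w ∈ W) → W = ⊥ ∨ W = ⊤)
    (k : Subfield ℂ) (hk : ∀ ζ : ℂ, IsPrimitiveRoot ζ p → ζ ∈ k) :
    2 * ((p : ℝ) + 1) / ((p : ℝ) + 3) ≤
      acd {f ∈ Irr (V ⋊[φ] H) | ∀ g, f g ∈ k} := by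
  classical
  let _ : Fintype (V ⋊[φ] H) := Fintype.ofEquiv _ SemidirectProduct.equivProd.symm
  set S : Set (V ⋊[φ] H → ℂ) := {f ∈ Irr (V ⋊[φ] H) | ∀ g, f g ∈ k} with hS
  have hfin : S.Finite := (irr_finite _).subset fun f hf => hf.1
  set c : ℝ := 2 * ((p : ℝ) + 1) / ((p : ℝ) + 3) with hc
  have hcV : Nat.card (V →* ℂˣ) = Nat.card V :=
    CommGroup.card_monoidHom_of_hasEnoughRootsOfUnity V ℂ
  have hcH : Nat.card (H →* ℂˣ) = Nat.card H :=
    CommGroup.card_monoidHom_of_hasEnoughRootsOfUnity H ℂ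
  have : Finite (V →* ℂˣ) := Nat.finite_of_card_ne_zero (by rw [hcV]; exact Nat.card_pos.ne')
  have : Finite (H →* ℂˣ) := Nat.finite_of_card_ne_zero (by rw [hcH]; exact Nat.card_pos.ne')
  let _ : Fintype (V →* ℂˣ) := Fintype.ofFinite _
  let _ : Fintype (H →* ℂˣ) := Fintype.ofFinite _
  have hp2 : (2 : ℝ) ≤ p := by exact_mod_cast hp.two_le
  have hh2 : (2 : ℝ) ≤ Fintype.card H := by exact_mod_cast Fintype.one_lt_card
  have hc2 : c ≤ 2 := by
    rw [hc, div_le_iff₀ (by linarith)]; linarith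
  set T := hfin.toFinset with hT
  let I : (V →* ℂˣ) → (V ⋊[φ] H → ℂ) := fun l => (FDRep.of (indRep φ l)).character
  set N : Finset (V →* ℂˣ) := Finset.univ.erase 1 with hN
  set A := N.image I with hA
  set L := T.filter (fun f => f 1 = 1) with hL
  have hNcard : N.card + 1 = p ^ a := by
    rw [hN, Finset.card_erase_add_one (Finset.mem_univ _), Finset.card_univ,
      ← Nat.card_eq_fintype_card, hcV, hcard]
  have hNA : N.card ≤ Fintype.card H * A.card := by
    refine Finset.card_le_mul_card_image N (Fintype.card H) fun b hb => ?_
    obtain ⟨l, hl, rfl⟩ := Finset.mem_image.mp hb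
    calc _ ≤ ((Finset.univ : Finset H).image (fun y => tw φ l y)).card := by
          refine Finset.card_le_card fun m hm => ?_
          obtain ⟨y, hy⟩ := ind_eq φ (Finset.mem_filter.mp hm).2.symm
          exact Finset.mem_image.mpr ⟨y, Finset.mem_univ _, hy.symm⟩
      _ ≤ _ := Finset.card_image_le
  have hpa : p ≤ p ^ a := Nat.le_self_pow ha.ne' p
  have hpA : p ≤ Fintype.card H * A.card + 1 := by omega
  have hA1 : 1 ≤ A.card := by
    rw [Nat.one_le_iff_ne_zero]
    intro h0
    rw [h0, mul_zero] at hpA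
    have := hp.two_le
    omega
  have hAT : A ⊆ T := by
    intro f hf
    obtain ⟨l, hl, rfl⟩ := Finset.mem_image.mp hf
    rw [hT, Set.Finite.mem_toFinset]
    exact ⟨ind_irr φ hfaith hirr (Finset.ne_of_mem_erase hl), ind_val φ hp helem k hk l⟩
  have hAone : ∀ f ∈ A, f 1 = (Fintype.card H : ℂ) := by
    intro f hf
    obtain ⟨l, hl, rfl⟩ := Finset.mem_image.mp hf
    exact ind_one φ l
  have hLmul : ∀ f ∈ L, f 1 = 1 ∧ ∀ x y, f (x * y) = f x * f y := by
    intro f hf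
    obtain ⟨hfT, hf1⟩ := Finset.mem_filter.mp hf
    rw [hT, Set.Finite.mem_toFinset] at hfT
    rcases irr_deg hfT.1 with h | h
    · rw [hf1] at h
      norm_num at h
    · exact h
  have hLcard : L.card ≤ Fintype.card H := by
    have hinj : Set.InjOn (fun (f : V ⋊[φ] H → ℂ) (x : H) => f (SemidirectProduct.inr x))
        (L : Set (V ⋊[φ] H → ℂ)) := by
      intro f hf f' hf' h
      exact lin_eq φ hfaith hirr (hLmul f hf).1 (hLmul f hf).2 (hLmul f' hf').1 (hLmul f' hf').2
        (fun x => congr_fun h x)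
    rw [← Finset.card_image_of_injOn hinj]
    calc _ ≤ ((Finset.univ : Finset (H →* ℂˣ)).image (fun χ x => (χ x : ℂ))).card := by
          refine Finset.card_le_card fun r hr => ?_
          obtain ⟨f, hf, rfl⟩ := Finset.mem_image.mp hr
          obtain ⟨h1, hm⟩ := hLmul f hf
          let F : H →* ℂ :=
            { toFun := fun x => f (SemidirectProduct.inr x)
              map_one' := by rw [map_one, h1]
              map_mul' := fun x y => by rw [map_mul, hm] }
          exact Finset.mem_image.mpr ⟨F.toHomUnits, Finset.mem_univ _, rfl⟩
      _ ≤ _ := Finset.card_image_le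
      _ = _ := by
        rw [Finset.card_univ, ← Nat.card_eq_fintype_card, hcH, Nat.card_eq_fintype_card]
  have hdisj : Disjoint A L := by
    rw [Finset.disjoint_left]
    intro f hfA hfL
    have h1 := hAone f hfA
    rw [(hLmul f hfL).1] at h1
    have h2 : 1 = Fintype.card H := by exact_mod_cast h1
    rw [← h2] at hh2
    norm_num at hh2
  have hsum : ∑ f ∈ A ∪ L, ((f 1).re - c) ≤ ∑ f ∈ T, ((f 1).re - c) := by
    refine Finset.sum_le_sum_of_subset_of_nonneg
      (Finset.union_subset hAT (Finset.filter_subset _ _)) fun f hf hn => ?_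
    have hfS : f ∈ S := by rwa [hT, Set.Finite.mem_toFinset] at hf
    rcases irr_deg hfS.1 with h | h
    · linarith
    · exact absurd (Finset.mem_union_right A (Finset.mem_filter.mpr ⟨hf, h.1⟩)) hn
  have hsA : ∑ f ∈ A, ((f 1).re - c) = A.card * (Fintype.card H - c) := by
    rw [Finset.sum_congr rfl fun f hf => by rw [hAone f hf, Complex.natCast_re], Finset.sum_const,
      nsmul_eq_mul]
  have hsL : ∑ f ∈ L, ((f 1).re - c) = L.card * (1 - c) := by
    rw [Finset.sum_congr rfl fun f hf => by rw [(hLmul f hf).1, Complex.one_re], Finset.sum_const,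
      nsmul_eq_mul]
  rw [Finset.sum_union hdisj, hsA, hsL] at hsum
  have har := arith p (Fintype.card H) A.card L.card hp2 hh2 (by exact_mod_cast hA1)
    (by exact_mod_cast hpA) (by exact_mod_cast hLcard)
  have hT0 : 0 < T.card := lt_of_lt_of_le hA1 (Finset.card_le_card hAT)
  rw [acd, finsum_mem_eq_finite_toFinset_sum _ hfin, Set.ncard_eq_toFinset_card S hfin,
    le_div_iff₀ (by exact_mod_cast hT0)]
  rw [Finset.sum_sub_distrib, Finset.sum_const, nsmul_eq_mul] at hsum
  linarith
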